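/- arXiv:1310.0981 — 2 statements merged into one kernel-verified Lean document; each statement's English description precedes it below -/
import Mathlib

section
/- Let m ≥ 1 and α, α̃ ∈ ℂ. Let f, f̃ : ℝ × ℤ → ℂ be differentiable in the time variable; define g = ∏_{s=1}^{m−1} f(·,·+s) − α, G = ∏_{s=0}^{m} f(·,·+s) − α, g̃ = ∏_{s=1}^{m−1} f̃(·,·+s) − α̃, G̃ = ∏_{s=0}^{m} f̃(·,·+s) − α̃, and assume G and G̃ are nowhere zero. Suppose f and f̃ each satisfy the modified lattice equation ∂_t f(t,n) = f(t,n)·(∏_{s=1}^{m−1} g(t,n−s))/(∏_{s=0}^{m} G(t,n−s))·(g(t,n)·g(t,n−m)·(G(t,n) − G(t,n−m)) − G(t,n)·G(t,n−m)·(g(t,n) − g(t,n−m))) (with the corresponding tilded quantities for f̃). Define the residual R(t,n) := g̃(t,n)·f̃(t,n)·G(t,n) − f(t,n+m)·g(t,n)·G̃(t,n). If for some time t₀ the relation R(t₀,n) = 0 holds for all n ∈ ℤ, then ∂_t R(t₀,n) = 0 for all n ∈ ℤ. -/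
/-!
Put `r = g / G`, `v = f r` and `u = f_m r`. The Bäcklund relation says that `v` built from `f̃`
coincides with `u` built from `f`, so it is enough that both Miura maps `f ↦ v` and `f ↦ u` send
solutions of the modified lattice to solutions of one and the same lattice, the discrete
Sawada–Kotera lattice `u_t = u (J(u) - J(u)_m)` with `J(u) = u_{-1} ⋯ u_{-m+1} (1 - u u_{-m})`.

The modified flow reads `f_t / f = J(v) - J(u)`. Multiplying by `α` turns its right-hand side into
a total difference `T_1 - T`; summing this over the window that defines `g` gives
`r_t / r = J(u) - J(v)_m`. Adding `f_t / f` or its shift by `m` yields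
`v_t / v = J(v) - J(v)_m` and `u_t / u = J(u) - J(u)_m`.
-/

open Finset Topology

@[to_additive]
lemma prod_Icc_eq_mul_prod_Ioo_mul {ι M : Type*} [PartialOrder ι] [LocallyFiniteOrder ι]
    [CommMonoid M] (h : ι → M) {a b : ι} (hab : a < b) :
    ∏ i ∈ Icc a b, h i = h a * (∏ i ∈ Ioo a b, h i) * h b := by
  rw [← prod_Ico_mul_eq_prod_Icc hab.le, ← mul_prod_Ioo_eq_prod_Ico hab]

lemma prod_Ico_mul_prod_Ico {ι M : Type*} [LinearOrder ι] [LocallyFiniteOrder ι]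
    [CommMonoid M] (h : ι → M) {a b c : ι} (hab : a ≤ b) (hbc : b ≤ c) :
    (∏ i ∈ Ico a b, h i) * ∏ i ∈ Ico b c, h i = ∏ i ∈ Ico a c, h i := by
  rw [← prod_union (Ico_disjoint_Ico_consecutive a b c), Ico_union_Ico_eq_Ico hab hbc]

section IntegerIntervals

variable {M : Type*} [CommMonoid M] (m : ℕ) (h : ℤ → M) (n : ℤ)

lemma prod_range_add_add_one_eq_prod_Ioo :
    ∏ s ∈ range (m - 1), h (n + s + 1) = ∏ i ∈ Ioo n (n + m), h i :=
  prod_nbij' (fun s => n + s + 1) (fun i => (i - n - 1).toNat)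
    (by grind) (by grind) (by grind) (by grind) (by grind)

lemma prod_range_sub_sub_one_eq_prod_Ioo :
    ∏ s ∈ range (m - 1), h (n - s - 1) = ∏ i ∈ Ioo (n - m) n, h i :=
  prod_nbij' (fun s => n - s - 1) (fun i => (n - i - 1).toNat)
    (by grind) (by grind) (by grind) (by grind) (by grind)

lemma prod_range_add_eq_prod_Icc :
    ∏ s ∈ range (m + 1), h (n + s) = ∏ i ∈ Icc n (n + m), h i :=
  prod_nbij' (fun s => n + s) (fun i => (i - n).toNat)
    (by grind) (by grind) (by grind) (by grind) (by grind)

lemma prod_range_sub_eq_prod_Icc :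
    ∏ s ∈ range (m + 1), h (n - s) = ∏ i ∈ Icc (n - m) n, h i :=
  prod_nbij' (fun s => n - s) (fun i => (n - i).toNat)
    (by grind) (by grind) (by grind) (by grind) (by grind)

lemma prod_Ioo_sub_add :
    ∏ i ∈ Ioo (n - m) n, h (i + m) = ∏ i ∈ Ioo n (n + m), h i := by
  simpa using (prod_map (Ioo (n - m) n) (addRightEmbedding (m : ℤ)) h).symm

end IntegerIntervals

lemma sum_Ioo_add_one_sub {A : Type*} [AddCommGroup A] (T : ℤ → A) {m : ℕ} (hm : 1 ≤ m) (n : ℤ) :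
    ∑ i ∈ Ioo n (n + m), (T (i + 1) - T i) = T (n + m) - T (n + 1) := by
  induction m, hm using Nat.le_induction with
  | base => simp [show Ioo n (n + 1) = ∅ by ext; simp]
  | succ k hk ih =>
    have hlt : n < n + k := by omega
    rw [Nat.cast_add_one, ← add_assoc, Ioo_add_one_right_eq_Ioc, ← sum_Ioo_add_eq_sum_Ioc hlt, ih]
    abel

lemma hasDerivAt_finsetProd_of_logDeriv {𝕜 𝔸 ι : Type*} [NontriviallyNormedField 𝕜]
    [NormedCommRing 𝔸] [NormedAlgebra 𝕜 𝔸] {f : 𝕜 → ι → 𝔸} {φ : ι → 𝔸} {t : 𝕜} {s : Finset ι}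
    (hf : ∀ i ∈ s, HasDerivAt (fun τ => f τ i) (f t i * φ i) t) :
    HasDerivAt (fun τ => ∏ i ∈ s, f τ i) ((∏ i ∈ s, f t i) * ∑ i ∈ s, φ i) t := by
  classical
  refine (HasDerivAt.fun_finsetProd hf).congr_deriv ?_
  rw [mul_sum]
  refine sum_congr rfl fun i hi => ?_
  rw [smul_eq_mul, ← mul_assoc, prod_erase_mul s _ hi]

namespace ModifiedDSK

section Algebra

variable {K : Type*} [Field K] (m : ℕ) (α : K) (f u : ℤ → K) (n : ℤ)

/-- The factor `g = f_{m-1} ⋯ f_1 - α` of the modified lattice. -/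
def innerFactor : K := (∏ s ∈ range (m - 1), f (n + s + 1)) - α

/-- The factor `G = f_m ⋯ f - α` of the modified lattice. -/
def outerFactor : K := (∏ s ∈ range (m + 1), f (n + s)) - α

/-- The right-hand side of the modified lattice equation. -/
noncomputable def modifiedField : K :=
  f n * (∏ s ∈ range (m - 1), innerFactor m α f (n - s - 1))
      / (∏ s ∈ range (m + 1), outerFactor m α f (n - s))
    * (innerFactor m α f n * innerFactor m α f (n - m)
        * (outerFactor m α f n - outerFactor m α f (n - m))
      - outerFactor m α f n * outerFactor m α f (n - m)
        * (innerFactor m α f n - innerFactor m α f (n - m)))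

/-- The ratio `r = g / G`, meant for `G ≠ 0`. -/
noncomputable def ratio : K := innerFactor m α f n / outerFactor m α f n

/-- The Miura map `f ↦ v = f g / G`, taking `f` at the left end of the window `n, …, n + m`. -/
noncomputable def leftMiura : K := f n * ratio m α f n

/-- The Miura map `f ↦ u = f_m g / G`, taking `f` at the right end of the window `n, …, n + m`. -/
noncomputable def rightMiura : K := f (n + m) * ratio m α f n

/-- The flux `J(u) = u_{-1} ⋯ u_{-m+1} (1 - u u_{-m})` in terms of which both lattices are
written. -/
noncomputable def flux : K := (∏ i ∈ Ioo (n - m) n, u i) * (1 - u n * u (n - m))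

/-- The right-hand side of the discrete Sawada–Kotera lattice
`u_t = u² (u_m ⋯ u_1 - u_{-1} ⋯ u_{-m}) - u (u_{m-1} ⋯ u_1 - u_{-1} ⋯ u_{-m+1})`,
with its terms collected into a difference of fluxes. -/
noncomputable def sawadaKoteraField : K := u n * (flux m u n - flux m u (n + m))

/-- The quantity `T` whose difference `T_1 - T` is `α f_t / f` along the modified lattice. -/
noncomputable def potential : K :=
  (∏ i ∈ Ico (n - m) n, ratio m α f i) * (α ^ 2 - ∏ i ∈ Ico (n - m) (n + m), f i)

/-- The residual `g̃ f̃ G - f_m g G̃` of the Bäcklund relation with its denominators cleared. -/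
def backlundResidual (m : ℕ) (α α' : K) (f f' : ℤ → K) (n : ℤ) : K :=
  innerFactor m α' f' n * f' n * outerFactor m α f n
    - f (n + m) * innerFactor m α f n * outerFactor m α' f' n

lemma prod_Ioo_eq_innerFactor_add : ∏ i ∈ Ioo n (n + m), f i = innerFactor m α f n + α := by
  rw [innerFactor, prod_range_add_add_one_eq_prod_Ioo, sub_add_cancel]

lemma prod_Icc_eq_outerFactor_add : ∏ i ∈ Icc n (n + m), f i = outerFactor m α f n + α := by
  rw [outerFactor, prod_range_add_eq_prod_Icc, sub_add_cancel]

variable {m} {α} {f} {n}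

lemma outerFactor_add_eq (hm : 1 ≤ m) :
    outerFactor m α f n + α = f n * (innerFactor m α f n + α) * f (n + m) := by
  rw [← prod_Icc_eq_outerFactor_add, prod_Icc_eq_mul_prod_Ioo_mul f (by omega),
    prod_Ioo_eq_innerFactor_add]

lemma ratio_mul_outerFactor (hG : outerFactor m α f n ≠ 0) :
    ratio m α f n * outerFactor m α f n = innerFactor m α f n :=
  div_mul_cancel₀ _ hG

lemma backlundResidual_eq {α' : K} {f' : ℤ → K} (hG : outerFactor m α f n ≠ 0)
    (hG' : outerFactor m α' f' n ≠ 0) :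
    backlundResidual m α α' f f' n = (leftMiura m α' f' n - rightMiura m α f n)
      * (outerFactor m α f n * outerFactor m α' f' n) := by
  rw [backlundResidual, leftMiura, rightMiura, ← ratio_mul_outerFactor hG,
    ← ratio_mul_outerFactor hG']
  ring

variable (n)

lemma flux_leftMiura (hm : 1 ≤ m) (hG : ∀ j, outerFactor m α f j ≠ 0) :
    flux m (leftMiura m α f) n = (∏ i ∈ Ioo (n - m) n, ratio m α f i)
      * (innerFactor m α f (n - m) * (1 - ratio m α f n)
        + α * (1 - ratio m α f n * ratio m α f (n - m))) := by
  have hprod : ∏ i ∈ Ioo (n - m) n, f i = innerFactor m α f (n - m) + α := by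
    simpa using prod_Ioo_eq_innerFactor_add m α f (n - m)
  have houter := outerFactor_add_eq (α := α) (f := f) (n := n - m) hm
  rw [sub_add_cancel] at houter
  have hratio := ratio_mul_outerFactor (hG (n - m))
  simp only [flux, leftMiura, prod_mul_distrib, hprod]
  linear_combination (∏ i ∈ Ioo (n - m) n, ratio m α f i) * ratio m α f n
    * (ratio m α f (n - m) * houter - hratio)

lemma flux_rightMiura (hm : 1 ≤ m) (hG : ∀ j, outerFactor m α f j ≠ 0) :
    flux m (rightMiura m α f) n = (∏ i ∈ Ioo (n - m) n, ratio m α f i)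
      * (innerFactor m α f n * (1 - ratio m α f (n - m))
        + α * (1 - ratio m α f n * ratio m α f (n - m))) := by
  have hprod : ∏ i ∈ Ioo (n - m) n, f (i + m) = innerFactor m α f n + α := by
    rw [prod_Ioo_sub_add, prod_Ioo_eq_innerFactor_add]
  have houter := outerFactor_add_eq (α := α) (f := f) (n := n) hm
  have hratio := ratio_mul_outerFactor (hG n)
  simp only [flux, rightMiura, prod_mul_distrib, hprod, sub_add_cancel]
  linear_combination (∏ i ∈ Ioo (n - m) n, ratio m α f i) * ratio m α f (n - m)
    * (ratio m α f n * houter - hratio)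

lemma modifiedField_eq_mul_flux_sub (hm : 1 ≤ m) (hG : ∀ j, outerFactor m α f j ≠ 0) :
    modifiedField m α f n
      = f n * (flux m (leftMiura m α f) n - flux m (rightMiura m α f) n) := by
  have hG₀ := hG n
  have hG₁ := hG (n - m)
  have hGprod : ∏ i ∈ Ioo (n - m) n, outerFactor m α f i ≠ 0 := prod_ne_zero_iff.2 fun i _ => hG i
  rw [flux_leftMiura n hm hG, flux_rightMiura n hm hG, modifiedField,
    prod_range_sub_sub_one_eq_prod_Ioo, prod_range_sub_eq_prod_Icc,
    prod_Icc_eq_mul_prod_Ioo_mul _ (by omega)]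
  simp only [ratio, prod_div_distrib]
  field_simp
  ring

lemma potential_eq (hm : 1 ≤ m) :
    potential m α f n = (∏ i ∈ Ioo (n - m) n, ratio m α f i) * ratio m α f (n - m)
      * (α ^ 2 - (outerFactor m α f (n - m) + α) * (innerFactor m α f n + α)) := by
  have hsplit : ∏ i ∈ Ico (n - m) (n + m), f i
      = (∏ i ∈ Icc (n - m) n, f i) * ∏ i ∈ Ioo n (n + m), f i := by
    rw [← Ico_add_one_right_eq_Icc, ← Ico_add_one_left_eq_Ioo,
      prod_Ico_mul_prod_Ico f (by omega) (by omega)]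
  have houter : ∏ i ∈ Icc (n - m) n, f i = outerFactor m α f (n - m) + α := by
    simpa using prod_Icc_eq_outerFactor_add m α f (n - m)
  rw [potential, hsplit, houter, prod_Ioo_eq_innerFactor_add m α f,
    ← prod_Ioo_mul_eq_prod_Ico (by omega)]

lemma potential_add_one_eq (hm : 1 ≤ m) :
    potential m α f (n + 1) = (∏ i ∈ Ioo (n - m) n, ratio m α f i) * ratio m α f n
      * (α ^ 2 - (outerFactor m α f n + α) * (innerFactor m α f (n - m) + α)) := by
  have hsplit : ∏ i ∈ Ioc (n - m) (n + m), f i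
      = (∏ i ∈ Ioo (n - m) n, f i) * ∏ i ∈ Icc n (n + m), f i := by
    rw [← Ico_add_one_left_eq_Ioo, ← Ico_add_one_right_eq_Icc,
      prod_Ico_mul_prod_Ico f (by omega) (by omega), Ico_add_one_add_one_eq_Ioc]
  have hinner : ∏ i ∈ Ioo (n - m) n, f i = innerFactor m α f (n - m) + α := by
    simpa using prod_Ioo_eq_innerFactor_add m α f (n - m)
  rw [potential, add_sub_right_comm, add_right_comm, Ico_add_one_add_one_eq_Ioc,
    Ico_add_one_add_one_eq_Ioc, hsplit, hinner, prod_Icc_eq_outerFactor_add m α f,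
    ← prod_Ioo_mul_eq_prod_Ioc (by omega)]
  ring

lemma mul_flux_sub_eq_potential_sub (hm : 1 ≤ m) (hG : ∀ j, outerFactor m α f j ≠ 0) :
    α * (flux m (leftMiura m α f) n - flux m (rightMiura m α f) n)
      = potential m α f (n + 1) - potential m α f n := by
  rw [flux_leftMiura n hm hG, flux_rightMiura n hm hG, potential_add_one_eq n hm,
    potential_eq n hm]
  linear_combination (∏ i ∈ Ioo (n - m) n, ratio m α f i)
    * ((innerFactor m α f (n - m) + α) * ratio_mul_outerFactor (hG n)
      - (innerFactor m α f n + α) * ratio_mul_outerFactor (hG (n - m)))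

lemma mul_sum_flux_sub_eq (hm : 1 ≤ m) (hG : ∀ j, outerFactor m α f j ≠ 0) :
    α * ∑ i ∈ Ioo n (n + m), (flux m (leftMiura m α f) i - flux m (rightMiura m α f) i)
      = potential m α f (n + m) - potential m α f (n + 1) := by
  simp only [mul_sum, mul_flux_sub_eq_potential_sub _ hm hG, sum_Ioo_add_one_sub _ hm]

lemma innerFactor_sum_sub_ratio_mul_outerFactor_sum (hm : 1 ≤ m)
    (hG : ∀ j, outerFactor m α f j ≠ 0) :
    (innerFactor m α f n + α)
        * ∑ i ∈ Ioo n (n + m), (flux m (leftMiura m α f) i - flux m (rightMiura m α f) i)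
      - ratio m α f n * ((outerFactor m α f n + α)
        * ∑ i ∈ Icc n (n + m), (flux m (leftMiura m α f) i - flux m (rightMiura m α f) i))
      = innerFactor m α f n
        * (flux m (rightMiura m α f) n - flux m (leftMiura m α f) (n + m)) := by
  have hsum := mul_sum_flux_sub_eq n hm hG
  rw [potential_eq _ hm, potential_add_one_eq _ hm] at hsum
  rw [sum_Icc_eq_add_sum_Ioo_add _ (by omega)]
  generalize ∑ i ∈ Ioo n (n + m),
    (flux m (leftMiura m α f) i - flux m (rightMiura m α f) i) = Φ at hsum ⊢
  simp only [flux_leftMiura _ hm hG, flux_rightMiura _ hm hG, add_sub_cancel_right] at hsum ⊢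
  rw [← ratio_mul_outerFactor (hG n)]
  linear_combination (1 - ratio m α f n) * hsum

end Algebra

section Flow

variable {𝕜 K : Type*} [NontriviallyNormedField 𝕜] [NontriviallyNormedField K]
  [NormedAlgebra 𝕜 K] (m : ℕ) (α : K) {f : 𝕜 → ℤ → K} {t : 𝕜}

lemma hasDerivAt_innerFactor {φ : ℤ → K} (hf : ∀ n, HasDerivAt (fun τ => f τ n) (f t n * φ n) t)
    (n : ℤ) :
    HasDerivAt (fun τ => innerFactor m α (f τ) n)
      ((innerFactor m α (f t) n + α) * ∑ i ∈ Ioo n (n + m), φ i) t := by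
  simp only [innerFactor, prod_range_add_add_one_eq_prod_Ioo, sub_add_cancel]
  exact (hasDerivAt_finsetProd_of_logDeriv fun i _ => hf i).sub_const α

lemma hasDerivAt_outerFactor {φ : ℤ → K} (hf : ∀ n, HasDerivAt (fun τ => f τ n) (f t n * φ n) t)
    (n : ℤ) :
    HasDerivAt (fun τ => outerFactor m α (f τ) n)
      ((outerFactor m α (f t) n + α) * ∑ i ∈ Icc n (n + m), φ i) t := by
  simp only [outerFactor, prod_range_add_eq_prod_Icc, sub_add_cancel]
  exact (hasDerivAt_finsetProd_of_logDeriv fun i _ => hf i).sub_const α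

variable {m α}

lemma hasDerivAt_mul_flux_sub (hm : 1 ≤ m) (hG : ∀ n, outerFactor m α (f t) n ≠ 0)
    (hf : ∀ n, HasDerivAt (fun τ => f τ n) (modifiedField m α (f t) n) t) (n : ℤ) :
    HasDerivAt (fun τ => f τ n)
      (f t n * (flux m (leftMiura m α (f t)) n - flux m (rightMiura m α (f t)) n)) t :=
  modifiedField_eq_mul_flux_sub n hm hG ▸ hf n

lemma hasDerivAt_ratio (hm : 1 ≤ m) (hG : ∀ n, outerFactor m α (f t) n ≠ 0)
    (hf : ∀ n, HasDerivAt (fun τ => f τ n) (modifiedField m α (f t) n) t) (n : ℤ) :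
    HasDerivAt (fun τ => ratio m α (f τ) n)
      (ratio m α (f t) n
        * (flux m (rightMiura m α (f t)) n - flux m (leftMiura m α (f t)) (n + m))) t := by
  have hlog := hasDerivAt_mul_flux_sub hm hG hf
  refine ((hasDerivAt_innerFactor m α hlog n).fun_div (hasDerivAt_outerFactor m α hlog n)
    (hG n)).congr_deriv ?_
  have hnumerator := innerFactor_sum_sub_ratio_mul_outerFactor_sum n hm hG
  rw [div_eq_iff (pow_ne_zero 2 (hG n))]
  rw [← ratio_mul_outerFactor (hG n)] at hnumerator ⊢
  linear_combination outerFactor m α (f t) n * hnumerator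

theorem hasDerivAt_leftMiura (hm : 1 ≤ m) (hG : ∀ n, outerFactor m α (f t) n ≠ 0)
    (hf : ∀ n, HasDerivAt (fun τ => f τ n) (modifiedField m α (f t) n) t) (n : ℤ) :
    HasDerivAt (fun τ => leftMiura m α (f τ) n)
      (sawadaKoteraField m (leftMiura m α (f t)) n) t := by
  refine ((hasDerivAt_mul_flux_sub hm hG hf n).mul
    (hasDerivAt_ratio hm hG hf n)).congr_deriv ?_
  rw [sawadaKoteraField, leftMiura]
  ring

theorem hasDerivAt_rightMiura (hm : 1 ≤ m) (hG : ∀ n, outerFactor m α (f t) n ≠ 0)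
    (hf : ∀ n, HasDerivAt (fun τ => f τ n) (modifiedField m α (f t) n) t) (n : ℤ) :
    HasDerivAt (fun τ => rightMiura m α (f τ) n)
      (sawadaKoteraField m (rightMiura m α (f t)) n) t := by
  refine ((hasDerivAt_mul_flux_sub hm hG hf (n + m)).mul
    (hasDerivAt_ratio hm hG hf n)).congr_deriv ?_
  rw [sawadaKoteraField, rightMiura]
  ring

end Flow

end ModifiedDSK

open ModifiedDSK in
theorem backlund_modified_dSK_general {𝕜 K : Type*} [NontriviallyNormedField 𝕜]
    [NontriviallyNormedField K] [NormedAlgebra 𝕜 K] {m : ℕ} (hm : 1 ≤ m)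
    {α α' : K} {f f' : 𝕜 → ℤ → K} {t₀ : 𝕜}
    (hG : ∀ n, outerFactor m α (f t₀) n ≠ 0) (hG' : ∀ n, outerFactor m α' (f' t₀) n ≠ 0)
    (hf : ∀ n, HasDerivAt (fun t => f t n) (modifiedField m α (f t₀) n) t₀)
    (hf' : ∀ n, HasDerivAt (fun t => f' t n) (modifiedField m α' (f' t₀) n) t₀)
    (hR : ∀ n, backlundResidual m α α' (f t₀) (f' t₀) n = 0) (n : ℤ) :
    HasDerivAt (fun t => backlundResidual m α α' (f t) (f' t) n) 0 t₀ := by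
  have hMiura : leftMiura m α' (f' t₀) = rightMiura m α (f t₀) := by
    ext j
    have hRj := hR j
    rw [backlundResidual_eq (hG j) (hG' j)] at hRj
    exact sub_eq_zero.1 ((mul_eq_zero_iff_right (mul_ne_zero (hG j) (hG' j))).1 hRj)
  have hdG := hasDerivAt_outerFactor m α (hasDerivAt_mul_flux_sub hm hG hf) n
  have hdG' := hasDerivAt_outerFactor m α' (hasDerivAt_mul_flux_sub hm hG' hf') n
  have hresidual : (fun t => backlundResidual m α α' (f t) (f' t) n) =ᶠ[𝓝 t₀] fun t =>
      (leftMiura m α' (f' t) n - rightMiura m α (f t) n)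
        * (outerFactor m α (f t) n * outerFactor m α' (f' t) n) := by
    filter_upwards [hdG.continuousAt.eventually_ne (hG n),
      hdG'.continuousAt.eventually_ne (hG' n)] with t ht ht'
      using backlundResidual_eq ht ht'
  refine ((((hasDerivAt_leftMiura hm hG' hf' n).sub (hasDerivAt_rightMiura hm hG hf n)).mul
    (hdG.mul hdG')).congr_of_eventuallyEq hresidual).congr_deriv ?_
  simp [hMiura]

/-- The denominator-cleared Bäcklund relation `g̃ f̃ G = f_m g G̃` for the modified
discretization of the Sawada–Kotera equation: differentiating it in virtue of the two
lattice flows yields a relation which holds identically in virtue of the relation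
itself. -/
theorem backlund_modified_dSK
    (m : ℕ) (hm : 1 ≤ m) (α α' : ℂ)
    (f f' : ℝ → ℤ → ℂ)
    (g G g' G' : ℝ → ℤ → ℂ)
    (hg : ∀ (t : ℝ) (n : ℤ),
      g t n = (∏ s ∈ Finset.range (m - 1), f t (n + s + 1)) - α)
    (hG : ∀ (t : ℝ) (n : ℤ),
      G t n = (∏ s ∈ Finset.range (m + 1), f t (n + s)) - α)
    (hg' : ∀ (t : ℝ) (n : ℤ),
      g' t n = (∏ s ∈ Finset.range (m - 1), f' t (n + s + 1)) - α')
    (hG' : ∀ (t : ℝ) (n : ℤ),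
      G' t n = (∏ s ∈ Finset.range (m + 1), f' t (n + s)) - α')
    (hG0 : ∀ (t : ℝ) (n : ℤ), G t n ≠ 0)
    (hG'0 : ∀ (t : ℝ) (n : ℤ), G' t n ≠ 0)
    (hf : ∀ (t : ℝ) (n : ℤ),
      HasDerivAt (fun τ => f τ n)
        (f t n * (∏ s ∈ Finset.range (m - 1), g t (n - s - 1))
            / (∏ s ∈ Finset.range (m + 1), G t (n - s))
          * (g t n * g t (n - m) * (G t n - G t (n - m))
            - G t n * G t (n - m) * (g t n - g t (n - m)))) t)
    (hf' : ∀ (t : ℝ) (n : ℤ),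
      HasDerivAt (fun τ => f' τ n)
        (f' t n * (∏ s ∈ Finset.range (m - 1), g' t (n - s - 1))
            / (∏ s ∈ Finset.range (m + 1), G' t (n - s))
          * (g' t n * g' t (n - m) * (G' t n - G' t (n - m))
            - G' t n * G' t (n - m) * (g' t n - g' t (n - m)))) t)
    (R : ℝ → ℤ → ℂ)
    (hR : ∀ (t : ℝ) (n : ℤ),
      R t n = g' t n * f' t n * G t n - f t (n + m) * g t n * G' t n)
    (t₀ : ℝ) (hR0 : ∀ n : ℤ, R t₀ n = 0) :
    ∀ n : ℤ, deriv (fun t => R t n) t₀ = 0 := by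
  simp only [hR, hg, hG, hg', hG'] at hG0 hG'0 hf hf' hR0 ⊢
  exact fun n =>
    (backlund_modified_dSK_general hm (hG0 t₀) (hG'0 t₀) (hf t₀) (hf' t₀) hR0 n).deriv
end

section
/- Let m ≥ 1 and let a, b ∈ ℂ with a ≠ b. For a tuple f = (f_0, f_1, …, f_m) ∈ ℂ^{m+1} and parameter c, set g = ∏_{s=1}^{m−1} f_s − c and G = ∏_{s=0}^{m} f_s − c, and let A[f, c, λ] be the (m+1)×(m+1) matrix with rows k = 1,…,m having diagonal entry −f_{k−1} and superdiagonal entry 1, and last row (λ, −λG/(g f_0), 0, …, 0, G/(g f_0) − f_m); let B[f, c, λ] be the (m+1)×(m+1) matrix with rows k = 1,…,m having diagonal entry 1 and superdiagonal entry −f_{k−1}, and last row (−λ f_m, λG/g, 0, …, 0, 1 − G/g); and let F[f, c, λ] := B[f, c, λ]^{−1}·A[f, c, λ] whenever B[f, c, λ] is invertible. Given tuples x (with parameter a) and y (with parameter b) whose components x_0,…,x_{m−1}, y_0,…,y_{m−1} are nonzero, define P_s = a·∏_{r=0}^{m−1} y_r − b·∏_{r=0}^{m−1} x_r + Σ_{r=0}^{m−1}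 γ_{r,s}·(x_r − y_r)·(∏_{t=0}^{r−1} x_t)·(∏_{t=0}^{r−1} y_t) for s = 0,…,m, where γ_{r,s} = 1 if s ≤ r and γ_{r,s} = a·b if r < s, and assume P_s ≠ 0 for all s. Define x'_s = P_{s+1}/(y_s·P_s) and y'_s = P'_{s+1}/(x_s·P'_s) for s = 0,…,m−1, where P'_s is obtained from P_s by interchanging the roles of (x, a) and (y, b), and let x'_m, y'_m ∈ ℂ be arbitrary. Then, whenever all the matrices B involved are invertible and all quantities are defined, the refactorization identity F[y', b, λ]·F[x, a, λ] = F[x', a, λ]·F[y, b, λ] holds for every λ ≠ 0. -/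
/-- The first-order matrix `A[f, c, λ]` of the Darboux transformation for the
discretization of the Sawada–Kotera equation. -/
noncomputable def dSKA (m : ℕ) (f : ℕ → ℂ) (c lam : ℂ) :
    Matrix (Fin (m + 1)) (Fin (m + 1)) ℂ :=
  Matrix.of fun k l =>
    if (k : ℕ) < m then
      (if l = k then -f (k : ℕ) else if (l : ℕ) = (k : ℕ) + 1 then 1 else 0)
    else
      (if (l : ℕ) = 0 then lam else 0)
      + (if (l : ℕ) = 1 then
          -lam * ((∏ s ∈ Finset.range (m + 1), f s) - c)
            / ((((∏ s ∈ Finset.range (m - 1), f (s + 1)) - c)) * f 0)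
         else 0)
      + (if (l : ℕ) = m then
          ((∏ s ∈ Finset.range (m + 1), f s) - c)
            / ((((∏ s ∈ Finset.range (m - 1), f (s + 1)) - c)) * f 0) - f m
         else 0)

/-- The first-order matrix `B[f, c, λ]` of the Darboux transformation for the
discretization of the Sawada–Kotera equation. -/
noncomputable def dSKB (m : ℕ) (f : ℕ → ℂ) (c lam : ℂ) :
    Matrix (Fin (m + 1)) (Fin (m + 1)) ℂ :=
  Matrix.of fun k l =>
    if (k : ℕ) < m then
      (if l = k then 1 else if (l : ℕ) = (k : ℕ) + 1 then -f (k : ℕ) else 0)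
    else
      (if (l : ℕ) = 0 then -lam * f m else 0)
      + (if (l : ℕ) = 1 then
          lam * ((∏ s ∈ Finset.range (m + 1), f s) - c)
            / ((∏ s ∈ Finset.range (m - 1), f (s + 1)) - c)
         else 0)
      + (if (l : ℕ) = m then
          1 - ((∏ s ∈ Finset.range (m + 1), f s) - c)
            / ((∏ s ∈ Finset.range (m - 1), f (s + 1)) - c)
         else 0)

/-- The Darboux matrix `F[f, c, λ] = B[f, c, λ]⁻¹ A[f, c, λ]`. -/
noncomputable def dSKF (m : ℕ) (f : ℕ → ℂ) (c lam : ℂ) :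
    Matrix (Fin (m + 1)) (Fin (m + 1)) ℂ :=
  (dSKB m f c lam)⁻¹ * dSKA m f c lam

/-- The polynomial `P_s` of the nonlinear superposition for the discretization of the
Sawada–Kotera equation. -/
noncomputable def dSKP (m : ℕ) (a b : ℂ) (x y : ℕ → ℂ) (s : ℕ) : ℂ :=
  a * (∏ r ∈ Finset.range m, y r) - b * (∏ r ∈ Finset.range m, x r)
    + ∑ r ∈ Finset.range m,
        (if s ≤ r then 1 else a * b) * (x r - y r)
          * (∏ t ∈ Finset.range r, x t) * ∏ t ∈ Finset.range r, y t

/-!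
The first row of `B q = A p` turns its last row into an equation free of `f_m`, up to the factor
`1 - f_0 f_m`, which the invertibility of `B` keeps away from zero. So `q = F p` amounts to `m`
two-term relations and one closing relation. If `q = F[x] p` and `r = F[y] p`, then the vector

  `χ_k = p_k + (1 - a b) (∏_{t<k} x_t y_t) / P_k * (q_k - r_k)`

satisfies these relations both with respect to `q` (with `y'`) and with respect to `r` (with `x'`).
Since `P` is antisymmetric under `(x, a) ↔ (y, b)`, the vector `χ` is symmetric, so one of the two
verifications is enough, and both sides of the refactorization identity map `p` to `χ`.
-/

namespace SawadaKotera

open Finset Matrix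

variable {K : Type*} [Field K]

/-- The function `g = f_1 ⋯ f_{m-1} - c` in the entries of the Darboux matrices. -/
def g (m : ℕ) (f : ℕ → K) (c : K) : K :=
  (∏ s ∈ range (m - 1), f (s + 1)) - c

/-- The function `G = f_0 ⋯ f_m - c` in the entries of the Darboux matrices. -/
def G (m : ℕ) (f : ℕ → K) (c : K) : K :=
  (∏ s ∈ range (m + 1), f s) - c

/-- The matrix `A[f, c, λ]` over a field. It is written entry by entry in the same way as `dSKA`,
so that the two agree definitionally over `ℂ`; likewise for `B`, `F` and `P` below. -/
def A (m : ℕ) (f : ℕ → K) (c lam : K) : Matrix (Fin (m + 1)) (Fin (m + 1)) K :=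
  Matrix.of fun k l =>
    if (k : ℕ) < m then
      (if l = k then -f (k : ℕ) else if (l : ℕ) = (k : ℕ) + 1 then 1 else 0)
    else
      (if (l : ℕ) = 0 then lam else 0)
      + (if (l : ℕ) = 1 then -lam * G m f c / (g m f c * f 0) else 0)
      + (if (l : ℕ) = m then G m f c / (g m f c * f 0) - f m else 0)

/-- The matrix `B[f, c, λ]` over a field. -/
def B (m : ℕ) (f : ℕ → K) (c lam : K) : Matrix (Fin (m + 1)) (Fin (m + 1)) K :=
  Matrix.of fun k l =>
    if (k : ℕ) < m then
      (if l = k then 1 else if (l : ℕ) = (k : ℕ) + 1 then -f (k : ℕ) else 0)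
    else
      (if (l : ℕ) = 0 then -lam * f m else 0)
      + (if (l : ℕ) = 1 then lam * G m f c / g m f c else 0)
      + (if (l : ℕ) = m then 1 - G m f c / g m f c else 0)

/-- The Darboux matrix `F[f, c, λ] = B[f, c, λ]⁻¹ A[f, c, λ]` over a field. -/
noncomputable def F (m : ℕ) (f : ℕ → K) (c lam : K) : Matrix (Fin (m + 1)) (Fin (m + 1)) K :=
  (B m f c lam)⁻¹ * A m f c lam

/-- The superposition polynomial `P_s` over a field, whose ratios give `x'` and `y'`. -/
def P (m : ℕ) (a b : K) (x y : ℕ → K) (s : ℕ) : K :=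
  a * (∏ r ∈ range m, y r) - b * (∏ r ∈ range m, x r)
    + ∑ r ∈ range m, (if s ≤ r then 1 else a * b) * (x r - y r)
        * (∏ t ∈ range r, x t) * ∏ t ∈ range r, y t

/-- The nondegeneracy conditions under which all entries of `A[f, c, λ]` and `B[f, c, λ]` are
defined and `F[f, c, λ]` exists. -/
structure IsRegular (m : ℕ) (f : ℕ → K) (c lam : K) : Prop where
  zero_ne : f 0 ≠ 0
  g_ne : g m f c ≠ 0
  isUnit_det : IsUnit (B m f c lam).det

/-- The scalar relations equivalent to `q = F[f, c, λ] p`. They do not involve `f_m`. -/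
structure DarbouxRel (m : ℕ) (f : ℕ → K) (c lam : K) (p q : Fin (m + 1) → K) : Prop where
  step (k : Fin m) : p k.succ - q k.castSucc = f k * (p k.castSucc - q k.succ)
  closing : (∏ s ∈ range m, f s) * (q (Fin.last m) - lam * p 0) =
    c * (lam * q 0 - p (Fin.last m))

/-- The common image of `p` under both sides of the refactorization identity, where `q = F[x] p`
and `r = F[y] p`. -/
def fourthVertex (m : ℕ) (a b : K) (x y : ℕ → K) (p q r : Fin (m + 1) → K) : Fin (m + 1) → K :=
  fun k => p k + (1 - a * b) * ((∏ t ∈ range k, x t) * ∏ t ∈ range k, y t) / P m a b x y k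
    * (q k - r k)

section Matrices

variable {n m : ℕ} {f : ℕ → K} {c lam : K}

lemma sum_ite_val_eq_mul {R : Type*} [NonUnitalNonAssocSemiring R] {N : ℕ} (j : Fin N) (d : R)
    (v : Fin N → R) : ∑ l : Fin N, (if (l : ℕ) = j then d else 0) * v l = d * v j := by
  simp [← Fin.ext_iff]

lemma sum_ite_castSucc_ite_succ_mul {R : Type*} [NonUnitalNonAssocSemiring R] (k : Fin m)
    (d e : R) (v : Fin (m + 1) → R) :
    ∑ l, (if l = k.castSucc then d else if (l : ℕ) = k + 1 then e else 0) * v l =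
      d * v k.castSucc + e * v k.succ := by
  rw [Fintype.sum_eq_add k.castSucc k.succ Fin.castSucc_lt_succ.ne]
  · simp [Fin.castSucc_lt_succ.ne']
  · rintro l ⟨hl, hl'⟩
    have hval : (l : ℕ) ≠ k + 1 := fun h => hl' (Fin.ext h)
    simp [hl, hval]

lemma sum_ite_zero_one_last_mul {R : Type*} [NonUnitalNonAssocSemiring R] (d e h : R)
    (v : Fin (n + 2) → R) :
    ∑ l : Fin (n + 2), ((if (l : ℕ) = 0 then d else 0) + (if (l : ℕ) = 1 then e else 0)
        + (if (l : ℕ) = n + 1 then h else 0)) * v l =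
      d * v 0 + e * v 1 + h * v (Fin.last (n + 1)) := by
  simp only [add_mul, sum_add_distrib]
  exact congrArg₂ _ (congrArg₂ _ (sum_ite_val_eq_mul 0 d v) (sum_ite_val_eq_mul 1 e v))
    (sum_ite_val_eq_mul (Fin.last (n + 1)) h v)

lemma A_mulVec_castSucc (v : Fin (m + 1) → K) (k : Fin m) :
    (A m f c lam *ᵥ v) k.castSucc = -f k * v k.castSucc + v k.succ := by
  simpa [A, mulVec, dotProduct] using sum_ite_castSucc_ite_succ_mul k (-f k) 1 v

lemma B_mulVec_castSucc (v : Fin (m + 1) → K) (k : Fin m) :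
    (B m f c lam *ᵥ v) k.castSucc = v k.castSucc - f k * v k.succ := by
  simpa [B, mulVec, dotProduct, sub_eq_add_neg] using sum_ite_castSucc_ite_succ_mul k 1 (-f k) v

lemma A_mulVec_last (v : Fin (n + 2) → K) :
    (A (n + 1) f c lam *ᵥ v) (Fin.last (n + 1)) =
      lam * v 0 + -lam * G (n + 1) f c / (g (n + 1) f c * f 0) * v 1
        + (G (n + 1) f c / (g (n + 1) f c * f 0) - f (n + 1)) * v (Fin.last (n + 1)) := by
  rw [← sum_ite_zero_one_last_mul]
  simp only [A, mulVec, dotProduct, of_apply, Fin.val_last, lt_irrefl, if_false]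

lemma B_mulVec_last (v : Fin (n + 2) → K) :
    (B (n + 1) f c lam *ᵥ v) (Fin.last (n + 1)) =
      -lam * f (n + 1) * v 0 + lam * G (n + 1) f c / g (n + 1) f c * v 1
        + (1 - G (n + 1) f c / g (n + 1) f c) * v (Fin.last (n + 1)) := by
  rw [← sum_ite_zero_one_last_mul]
  simp only [B, mulVec, dotProduct, of_apply, Fin.val_last, lt_irrefl, if_false]

lemma prod_range_eq_g_add_mul (n : ℕ) (f : ℕ → K) (c : K) :
    ∏ s ∈ range (n + 1), f s = (g (n + 1) f c + c) * f 0 := by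
  simp [g, prod_range_succ']

lemma G_eq_g_add_mul_sub (n : ℕ) (f : ℕ → K) (c : K) :
    G (n + 1) f c = (g (n + 1) f c + c) * f 0 * f (n + 1) - c := by
  rw [G, prod_range_succ, prod_range_eq_g_add_mul n f c]

lemma one_sub_mul_ne_zero_of_isUnit_det (hg : g (n + 1) f c ≠ 0)
    (hB : IsUnit (B (n + 1) f c lam).det) : 1 - f 0 * f (n + 1) ≠ 0 := by
  -- If `f_0 f_m = 1`, then `G = g` and the last row of `B` is `-λ f_m` times its first row.
  intro h
  have hG : G (n + 1) f c = g (n + 1) f c := by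
    linear_combination G_eq_g_add_mul_sub n f c - (g (n + 1) f c + c) * h
  obtain ⟨v, hv⟩ := mulVec_surjective_iff_isUnit.2 ((isUnit_iff_isUnit_det _).2 hB)
    (Pi.single (Fin.last (n + 1)) 1)
  have hfirst : v 0 - f 0 * v 1 = 0 := by
    have hentry := B_mulVec_castSucc (f := f) (c := c) (lam := lam) v 0
    rw [hv, Pi.single_eq_of_ne (Fin.castSucc_ne_last 0)] at hentry
    exact hentry.symm
  have hlast : -(lam * f (n + 1) * v 0) + lam * v 1 = 1 := by
    simpa [hv, hG, hg] using (B_mulVec_last (f := f) (c := c) (lam := lam) v).symm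
  refine one_ne_zero (α := K) ?_
  linear_combination -hlast - lam * f (n + 1) * hfirst + lam * v 1 * h

lemma g_mul_B_sub_A_mulVec_last (hf : f 0 ≠ 0) (hg : g (n + 1) f c ≠ 0) {p q : Fin (n + 2) → K}
    (hstep : p 1 - q 0 = f 0 * (p 0 - q 1)) :
    g (n + 1) f c * f 0 * ((B (n + 1) f c lam *ᵥ q) (Fin.last (n + 1))
        - (A (n + 1) f c lam *ᵥ p) (Fin.last (n + 1))) =
      (1 - f 0 * f (n + 1)) * ((∏ s ∈ range (n + 1), f s) * (q (Fin.last (n + 1)) - lam * p 0)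
        - c * (lam * q 0 - p (Fin.last (n + 1)))) := by
  rw [B_mulVec_last, A_mulVec_last, prod_range_eq_g_add_mul n f c, G_eq_g_add_mul_sub]
  field_simp
  linear_combination lam * ((g (n + 1) f c + c) * f 0 * f (n + 1) - c) * hstep

lemma B_mulVec_castSucc_eq_A_mulVec_iff {p q : Fin (m + 1) → K} (k : Fin m) :
    (B m f c lam *ᵥ q) k.castSucc = (A m f c lam *ᵥ p) k.castSucc ↔
      p k.succ - q k.castSucc = f k * (p k.castSucc - q k.succ) := by
  rw [B_mulVec_castSucc, A_mulVec_castSucc]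
  constructor <;> intro h <;> linear_combination -h

lemma B_mulVec_last_eq_A_mulVec_iff (h : IsRegular (n + 1) f c lam) {p q : Fin (n + 2) → K}
    (hstep : p 1 - q 0 = f 0 * (p 0 - q 1)) :
    (B (n + 1) f c lam *ᵥ q) (Fin.last (n + 1)) = (A (n + 1) f c lam *ᵥ p) (Fin.last (n + 1)) ↔
      (∏ s ∈ range (n + 1), f s) * (q (Fin.last (n + 1)) - lam * p 0) =
        c * (lam * q 0 - p (Fin.last (n + 1))) := by
  have hne := one_sub_mul_ne_zero_of_isUnit_det h.g_ne h.isUnit_det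
  rw [← sub_eq_zero, ← mul_eq_zero_iff_left (mul_ne_zero h.g_ne h.zero_ne),
    g_mul_B_sub_A_mulVec_last h.zero_ne h.g_ne hstep, mul_eq_zero_iff_left hne, sub_eq_zero]

lemma eq_F_mulVec_iff_B_mulVec_eq (hB : IsUnit (B m f c lam).det) {p q : Fin (m + 1) → K} :
    q = F m f c lam *ᵥ p ↔ B m f c lam *ᵥ q = A m f c lam *ᵥ p := by
  constructor
  · rintro rfl
    rw [F, mulVec_mulVec, mul_nonsing_inv_cancel_left _ _ hB]
  · intro h
    rw [F, ← mulVec_mulVec, ← h, mulVec_mulVec, nonsing_inv_mul _ hB, one_mulVec]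

theorem eq_F_mulVec_iff_darbouxRel (h : IsRegular (n + 1) f c lam) {p q : Fin (n + 2) → K} :
    q = F (n + 1) f c lam *ᵥ p ↔ DarbouxRel (n + 1) f c lam p q := by
  rw [eq_F_mulVec_iff_B_mulVec_eq h.isUnit_det]
  constructor
  · intro hBA
    have hstep (k) := (B_mulVec_castSucc_eq_A_mulVec_iff k).1 (congrFun hBA k.castSucc)
    exact ⟨hstep, (B_mulVec_last_eq_A_mulVec_iff h (hstep 0)).1 (congrFun hBA _)⟩
  · rintro ⟨hstep, hclosing⟩
    ext k
    induction k using Fin.lastCases with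
    | last => exact (B_mulVec_last_eq_A_mulVec_iff h (hstep 0)).2 hclosing
    | cast k => exact (B_mulVec_castSucc_eq_A_mulVec_iff k).2 (hstep k)

end Matrices

section Superposition

variable {n m : ℕ} {a b lam : K} {x y x' : ℕ → K}

lemma P_swap (m : ℕ) (a b : K) (x y : ℕ → K) (s : ℕ) : P m b a y x s = -P m a b x y s := by
  simp only [P, neg_add, neg_sub, ← sum_neg_distrib]
  congr 1
  refine sum_congr rfl fun r _ => ?_
  rw [mul_comm b a]
  ring

lemma P_succ {s : ℕ} (hs : s < m) :
    P m a b x y (s + 1) = P m a b x y s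
      - (1 - a * b) * (x s - y s) * ((∏ t ∈ range s, x t) * ∏ t ∈ range s, y t) := by
  rw [eq_sub_iff_add_eq', ← eq_sub_iff_add_eq, P, P, add_sub_add_left_eq_sub, ← sum_sub_distrib,
    sum_eq_single_of_mem s (mem_range.2 hs)]
  · simp only [le_refl, if_true, Nat.not_succ_le_self, if_false]
    ring
  · intro r _ hr
    have hle : s + 1 ≤ r ↔ s ≤ r := by lia
    simp [hle]

lemma P_last (m : ℕ) (a b : K) (x y : ℕ → K) :
    P m a b x y m = a * b * P m a b x y 0
      + (1 - a * b) * (a * (∏ t ∈ range m, y t) - b * ∏ t ∈ range m, x t) := by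
  have hsum : ∑ r ∈ range m, (if m ≤ r then 1 else a * b) * (x r - y r)
        * (∏ t ∈ range r, x t) * ∏ t ∈ range r, y t =
      a * b * ∑ r ∈ range m, (x r - y r) * (∏ t ∈ range r, x t) * ∏ t ∈ range r, y t := by
    rw [mul_sum]
    refine sum_congr rfl fun r hr => ?_
    rw [if_neg (mem_range.1 hr).not_ge]
    ring
  simp only [P, hsum, zero_le, if_true, one_mul]
  ring

lemma prod_range_eq_div_of_ratio {u v z : ℕ → K} (hu : ∀ s ≤ m, u s ≠ 0)
    (hz : ∀ s < m, z s = u (s + 1) / (v s * u s)) :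
    ∏ s ∈ range m, z s = u m / ((∏ s ∈ range m, v s) * u 0) := by
  induction m with
  | zero => simp [hu]
  | succ m ih =>
    have hum : u m ≠ 0 := hu m m.le_succ
    rw [prod_range_succ, prod_range_succ, hz m m.lt_succ_self,
      ih (fun s hs => hu s (by lia)) (fun s hs => hz s (by lia))]
    field_simp

lemma fourthVertex_swap (p q r : Fin (m + 1) → K) :
    fourthVertex m b a y x p r q = fourthVertex m a b x y p q r := by
  ext k
  rw [fourthVertex, fourthVertex, P_swap m a b, mul_comm b a, div_neg]
  ring

lemma fourthVertex_step {k : Fin m} (hy : y k ≠ 0) (hP : P m a b x y k ≠ 0)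
    (hPnext : P m a b x y (k + 1) ≠ 0) (hx' : x' k = P m a b x y (k + 1) / (y k * P m a b x y k))
    {p q r : Fin (m + 1) → K}
    (hq : p k.succ - q k.castSucc = x k * (p k.castSucc - q k.succ))
    (hr : p k.succ - r k.castSucc = y k * (p k.castSucc - r k.succ)) :
    r k.succ - fourthVertex m a b x y p q r k.castSucc =
      x' k * (r k.castSucc - fourthVertex m a b x y p q r k.succ) := by
  simp only [fourthVertex, Fin.val_castSucc, Fin.val_succ, prod_range_succ, hx']
  have hqk : q k.castSucc = p k.succ - x k * (p k.castSucc - q k.succ) := by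
    rw [← hq, sub_sub_cancel]
  have hrk : r k.castSucc = p k.succ - y k * (p k.castSucc - r k.succ) := by
    rw [← hr, sub_sub_cancel]
  rw [hqk, hrk]
  field_simp
  rw [P_succ k.isLt]
  ring

theorem darbouxRel_fourthVertex (hy : ∀ s < m, y s ≠ 0) (hP : ∀ s ≤ m, P m a b x y s ≠ 0)
    (hx' : ∀ s < m, x' s = P m a b x y (s + 1) / (y s * P m a b x y s))
    {p q r : Fin (m + 1) → K} (hq : DarbouxRel m x a lam p q) (hr : DarbouxRel m y b lam p r) :
    DarbouxRel m x' a lam r (fourthVertex m a b x y p q r) := by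
  refine ⟨fun k => fourthVertex_step (hy k k.isLt) (hP k k.isLt.le) (hP (k + 1) k.isLt)
    (hx' k k.isLt) (hq.step k) (hr.step k), ?_⟩
  have hP0 := hP 0 m.zero_le
  have hPm := hP m le_rfl
  have hY : ∏ s ∈ range m, y s ≠ 0 := prod_ne_zero_iff.2 fun s hs => hy s (mem_range.1 hs)
  simp only [prod_range_eq_div_of_ratio hP hx', fourthVertex, Fin.val_last, Fin.val_zero,
    prod_range_zero, mul_one]
  field_simp
  rw [P_last]
  linear_combination (a * P m a b x y 0 - (1 - a * b) * ∏ t ∈ range m, x t) * hr.closing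
    + (1 - a * b) * (∏ t ∈ range m, y t) * hq.closing

theorem F_mulVec_F_mulVec_eq_fourthVertex (hy : ∀ s < n + 1, y s ≠ 0)
    (hP : ∀ s ≤ n + 1, P (n + 1) a b x y s ≠ 0)
    (hx' : ∀ s < n + 1, x' s = P (n + 1) a b x y (s + 1) / (y s * P (n + 1) a b x y s))
    (hxreg : IsRegular (n + 1) x a lam) (hyreg : IsRegular (n + 1) y b lam)
    (hxreg' : IsRegular (n + 1) x' a lam) (p : Fin (n + 2) → K) :
    F (n + 1) x' a lam *ᵥ (F (n + 1) y b lam *ᵥ p) =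
      fourthVertex (n + 1) a b x y p (F (n + 1) x a lam *ᵥ p) (F (n + 1) y b lam *ᵥ p) :=
  have hq := (eq_F_mulVec_iff_darbouxRel hxreg).1 rfl
  have hr := (eq_F_mulVec_iff_darbouxRel hyreg).1 rfl
  ((eq_F_mulVec_iff_darbouxRel hxreg').2 (darbouxRel_fourthVertex hy hP hx' hq hr)).symm

lemma superposed_ne_zero (hy : ∀ s < m, y s ≠ 0) (hP : ∀ s ≤ m, P m a b x y s ≠ 0)
    (hx' : ∀ s < m, x' s = P m a b x y (s + 1) / (y s * P m a b x y s)) {s : ℕ} (hs : s < m) :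
    x' s ≠ 0 := by
  rw [hx' s hs]
  exact div_ne_zero (hP (s + 1) hs) (mul_ne_zero (hy s hs) (hP s hs.le))

end Superposition

end SawadaKotera

open SawadaKotera Matrix in
/-- Over a general field, `lam` may be the indeterminate of a field of rational functions, so that
the identity also covers the refactorization as an identity in `λ`. -/
theorem dSK_superposition_refactorization_general {K : Type*} [Field K]
    {m : ℕ} (hm : 1 ≤ m) {a b : K} {x y x' y' : ℕ → K}
    (hx0 : ∀ s < m, x s ≠ 0) (hy0 : ∀ s < m, y s ≠ 0)
    (hP : ∀ s ≤ m, P m a b x y s ≠ 0)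
    (hx' : ∀ s < m, x' s = P m a b x y (s + 1) / (y s * P m a b x y s))
    (hy' : ∀ s < m, y' s = P m b a y x (s + 1) / (x s * P m b a y x s))
    (hgx : g m x a ≠ 0) (hgy : g m y b ≠ 0) (hgx' : g m x' a ≠ 0) (hgy' : g m y' b ≠ 0)
    {lam : K} (hBx : IsUnit (B m x a lam).det) (hBy : IsUnit (B m y b lam).det)
    (hBx' : IsUnit (B m x' a lam).det) (hBy' : IsUnit (B m y' b lam).det) :
    F m y' b lam * F m x a lam = F m x' a lam * F m y b lam := by
  have hP' (s : ℕ) (hs : s ≤ m) : P m b a y x s ≠ 0 := by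
    rw [P_swap m a b]
    exact neg_ne_zero.2 (hP s hs)
  have hx : IsRegular m x a lam := ⟨hx0 0 hm, hgx, hBx⟩
  have hy : IsRegular m y b lam := ⟨hy0 0 hm, hgy, hBy⟩
  have hxreg' : IsRegular m x' a lam := ⟨superposed_ne_zero hy0 hP hx' hm, hgx', hBx'⟩
  have hyreg' : IsRegular m y' b lam := ⟨superposed_ne_zero hx0 hP' hy' hm, hgy', hBy'⟩
  obtain ⟨n, rfl⟩ := Nat.exists_eq_add_of_le' hm
  refine mulVec_injective (funext fun p => ?_)
  rw [← mulVec_mulVec, ← mulVec_mulVec,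
    F_mulVec_F_mulVec_eq_fourthVertex hy0 hP hx' hx hy hxreg',
    F_mulVec_F_mulVec_eq_fourthVertex hx0 hP' hy' hy hx hyreg', fourthVertex_swap]

/-- Nonlinear superposition of Darboux transformations for the discretization of the
Sawada–Kotera equation: the refactorization identity
`F[y', b, λ] F[x, a, λ] = F[x', a, λ] F[y, b, λ]` holds with
`x'_s = P_{s+1}/(y_s P_s)` and `y'_s = P'_{s+1}/(x_s P'_s)`. -/
theorem dSK_superposition_refactorization
    (m : ℕ) (hm : 1 ≤ m) (a b : ℂ) (hab : a ≠ b)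
    (x y x' y' : ℕ → ℂ)
    (hx0 : ∀ s, s < m → x s ≠ 0) (hy0 : ∀ s, s < m → y s ≠ 0)
    (hP : ∀ s, s ≤ m → dSKP m a b x y s ≠ 0)
    (hP' : ∀ s, s ≤ m → dSKP m b a y x s ≠ 0)
    (hx' : ∀ s, s < m → x' s = dSKP m a b x y (s + 1) / (y s * dSKP m a b x y s))
    (hy' : ∀ s, s < m → y' s = dSKP m b a y x (s + 1) / (x s * dSKP m b a y x s))
    (hgx : (∏ s ∈ Finset.range (m - 1), x (s + 1)) - a ≠ 0)
    (hgy : (∏ s ∈ Finset.range (m - 1), y (s + 1)) - b ≠ 0)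
    (hgx' : (∏ s ∈ Finset.range (m - 1), x' (s + 1)) - a ≠ 0)
    (hgy' : (∏ s ∈ Finset.range (m - 1), y' (s + 1)) - b ≠ 0) :
    ∀ lam : ℂ, lam ≠ 0 →
      IsUnit (dSKB m x a lam).det → IsUnit (dSKB m y b lam).det →
      IsUnit (dSKB m x' a lam).det → IsUnit (dSKB m y' b lam).det →
      dSKF m y' b lam * dSKF m x a lam = dSKF m x' a lam * dSKF m y b lam := by
  exact fun _ _ => dSK_superposition_refactorization_general hm hx0 hy0 hP hx' hy' hgx hgy hgx' hgy'
end
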